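/- Let (E_1^N,...,E_N^N)_{N≥N_0} be a sequence of symmetric sequences of events such that for all N ≥ N_0 the events E_1^N,...,E_N^N are correlated up to order l_max with the same correlation coefficients C_1,...,C_{l_max} (where C_l := N^l G_l^{(N)}(1,...,1) and C_l = 0 for l > l_max). Let p_N(s) be the probability that exactly s of the N events occur. Then for every s ∈ ℕ, p_N(s) converges as N → ∞ to p_∞(s), where the limit distribution has characteristic function χ(u) = Σ_{s≥0} e^{ius} p_∞(s) = exp[Σ_{l=1}^{l_max} Σ_{t=0}^{l} (−1)^{l−t} (C_l/l!) C(l,t) e^{itu}]. -/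

import Mathlib

open MeasureTheory Finset Filter
open scoped Classical

/-- The joint probability `P(𝟙_{E_1}=r_1, …, 𝟙_{E_N}=r_N)`. -/
noncomputable def jointProb {Ω : Type*} [MeasurableSpace Ω] (μ : Measure Ω) {N : ℕ}
    (E : Fin N → Set Ω) (r : Fin N → Bool) : ℝ :=
  (μ {ω | ∀ i, ω ∈ E i ↔ r i = true}).toReal

/-- A finite sequence of events is symmetric if the joint distribution of the
indicator functions is invariant under permutations of the events. -/
def IsSymmetricEvents {Ω : Type*} [MeasurableSpace Ω] (μ : Measure Ω) {N : ℕ}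
    (E : Fin N → Set Ω) : Prop :=
  ∀ (σ : Equiv.Perm (Fin N)) (r : Fin N → Bool),
    jointProb μ E r = jointProb μ E (r ∘ σ)

/-- The probability function of order `k`:
`P_k(r_1,…,r_k) = P(𝟙_{E_1}=r_1, …, 𝟙_{E_k}=r_k)`. -/
noncomputable def probFun {Ω : Type*} [MeasurableSpace Ω] (μ : Measure Ω) {N : ℕ}
    (E : Fin N → Set Ω) (k : ℕ) (hk : k ≤ N) (r : Fin k → Bool) : ℝ :=
  (μ {ω | ∀ i : Fin k, (ω ∈ E (Fin.castLE hk i) ↔ r i = true)}).toReal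

/-- The sum, over all set partitions of `{1,…,k}` into at least two blocks, of the
product over the blocks `B` of `G_{|B|}` evaluated at the arguments `(r_i)_{i∈B}`,
taken in increasing index order. -/
noncomputable def partSum (G : (k : ℕ) → (Fin k → Bool) → ℝ) (k : ℕ)
    (r : Fin k → Bool) : ℝ :=
  ∑ π : Finset (Finset (Fin k)),
    if ((∀ B ∈ π, B.Nonempty) ∧ (∀ i : Fin k, ∃! B, B ∈ π ∧ i ∈ B)) ∧ 2 ≤ π.card then
      ∏ B ∈ π, G B.card (fun j => r (B.orderIsoOfFin rfl j).1)
    else 0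

/-- The count probability `p_N(s)`: the probability that exactly `s` of the `N`
events occur. -/
noncomputable def countProb {Ω : Type*} [MeasurableSpace Ω] (μ : Measure Ω) {N : ℕ}
    (E : Fin N → Set Ω) (s : ℕ) : ℝ :=
  (μ {ω | (∑ i : Fin N, if ω ∈ E i then 1 else 0) = s}).toReal


def IsPart {α : Type*} (S : Finset α) (π : Finset (Finset α)) : Prop :=
  (∀ B ∈ π, B.Nonempty) ∧ (∀ B ∈ π, B ⊆ S) ∧ (∀ i ∈ S, ∃ B ∈ π, i ∈ B) ∧
    (∀ B ∈ π, ∀ B' ∈ π, ∀ i, i ∈ B → i ∈ B' → B = B')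

noncomputable def partW {α : Type*} (c : ℕ → ℝ) (S : Finset α) : ℝ :=
  ∑ π ∈ S.powerset.powerset with IsPart S π, ∏ B ∈ π, c B.card

theorem partW_empty {α : Type*} (c : ℕ → ℝ) : partW c (∅ : Finset α) = 1 := by
  unfold partW
  have : ((∅ : Finset α).powerset.powerset.filter (IsPart ∅)) = {∅} := by
    ext π
    simp only [Finset.mem_filter, Finset.mem_powerset, Finset.mem_singleton, IsPart]
    constructor
    · rintro ⟨h1, h2, h3, -⟩
      apply Finset.eq_empty_of_forall_notMem
      intro B hB
      have := h2 B hB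
      have := h3 B hB
      grind
    · rintro rfl
      simp
  rw [this]; simp

theorem partW_insert {α : Type*} (c : ℕ → ℝ) (S : Finset α) (a : α) (ha : a ∉ S) :
    partW c (insert a S) = ∑ T ∈ S.powerset, c (T.card + 1) * partW c (S \ T) := by
  unfold partW
  simp_rw [Finset.mul_sum]
  rw [Finset.sum_sigma']
  symm
  refine Finset.sum_bij (fun x _ => insert (insert a x.1) x.2) ?_ ?_ ?_ ?_
  · rintro ⟨T, ρ⟩ h
    simp only [Finset.mem_sigma, Finset.mem_filter, Finset.mem_powerset] at h ⊢
    simp only [IsPart] at h ⊢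
    obtain ⟨hT, hρ, h1, h2, h3, h4⟩ := h
    have key : ∀ B ∈ ρ, ∀ i ∈ B, i ∈ S ∧ i ∉ T := fun B hB i hi => by
      have := h2 B hB hi; simpa using this
    refine ⟨?_, ?_, ?_, ?_, ?_⟩
    · intro B hB
      rw [Finset.mem_powerset]
      intro i hi
      grind
    · intro B hB
      rcases Finset.mem_insert.1 hB with rfl | hB
      · simp
      · exact h1 B hB
    · intro B hB i hi
      grind
    · intro i hi
      by_cases hiT : i ∈ insert a T
      · exact ⟨_, Finset.mem_insert_self _ _, hiT⟩
      · have : i ∈ S \ T := by grind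
        obtain ⟨B, hB, hiB⟩ := h3 i this
        exact ⟨B, Finset.mem_insert_of_mem hB, hiB⟩
    · intro B hB B' hB' i hi hi'
      rcases Finset.mem_insert.1 hB with rfl | hB <;> rcases Finset.mem_insert.1 hB' with rfl | hB'
      · rfl
      · have := key _ hB' i hi'; grind
      · have := key _ hB i hi; grind
      · exact h4 B hB B' hB' i hi hi'
  · rintro ⟨T, ρ⟩ h ⟨T', ρ'⟩ h' heq
    simp only [Finset.mem_sigma, Finset.mem_filter, Finset.mem_powerset] at h h' heq
    simp only [IsPart] at h h'
    obtain ⟨hT, hρ, h1, h2, h3, h4⟩ := h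
    obtain ⟨hT', hρ', h1', h2', h3', h4'⟩ := h'
    have na : ∀ B ∈ ρ, a ∉ B := fun B hB hi => by
      have := h2 B hB hi; grind
    have na' : ∀ B ∈ ρ', a ∉ B := fun B hB hi => by
      have := h2' B hB hi; grind
    have e1 : insert a T = insert a T' := by
      have : insert a T ∈ insert (insert a T') ρ' := heq ▸ Finset.mem_insert_self _ _
      rcases Finset.mem_insert.1 this with h | h
      · exact h
      · exact absurd (Finset.mem_insert_self a T) (na' _ h)
    have e2 : T = T' := by
      have h1 : a ∉ T := fun h => ha (hT h)
      have h2 : a ∉ T' := fun h => ha (hT' h)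
      rw [← Finset.erase_insert h1, e1, Finset.erase_insert h2]
    subst e2
    have n1 : insert a T ∉ ρ := fun h => na _ h (Finset.mem_insert_self _ _)
    have n2 : insert a T ∉ ρ' := fun h => na' _ h (Finset.mem_insert_self _ _)
    have e3 : ρ = ρ' := by
      rw [← Finset.erase_insert n1, heq, Finset.erase_insert n2]
    subst e3
    rfl
  · intro π hπ
    simp only [Finset.mem_filter, Finset.mem_powerset] at hπ
    simp only [IsPart] at hπ
    obtain ⟨hp, h1, h2, h3, h4⟩ := hπ
    obtain ⟨A, hA, haA⟩ := h3 a (Finset.mem_insert_self _ _)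
    refine ⟨⟨A.erase a, π.erase A⟩, ?_, ?_⟩
    · simp only [Finset.mem_sigma, Finset.mem_filter, Finset.mem_powerset]
      simp only [IsPart]
      have hsub : ∀ B ∈ π.erase A, B ⊆ S \ A.erase a := by
        intro B hB i hi
        have hBA := Finset.ne_of_mem_erase hB
        have hBπ := Finset.mem_of_mem_erase hB
        have hiA : i ∉ A := fun h => hBA (h4 B hBπ A hA i hi h)
        have := h2 B hBπ hi
        grind
      refine ⟨?_, ?_, ?_, hsub, ?_, ?_⟩
      · intro i hi
        have := h2 A hA (Finset.mem_of_mem_erase hi)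
        grind
      · intro B hB
        exact Finset.mem_powerset.2 (hsub B hB)
      · intro B hB
        exact h1 B (Finset.mem_of_mem_erase hB)
      · intro i hi
        obtain ⟨B, hB, hiB⟩ := h3 i (by grind)
        refine ⟨B, Finset.mem_erase.2 ⟨?_, hB⟩, hiB⟩
        rintro rfl
        grind
      · intro B hB B' hB'
        exact h4 B (Finset.mem_of_mem_erase hB) B' (Finset.mem_of_mem_erase hB')
    · simp only [Finset.insert_erase haA, Finset.insert_erase hA]
  · rintro ⟨T, ρ⟩ h
    simp only [Finset.mem_sigma, Finset.mem_filter, Finset.mem_powerset] at h ⊢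
    simp only [IsPart] at h ⊢
    obtain ⟨hT, hρ, h1, h2, h3, h4⟩ := h
    have n1 : insert a T ∉ ρ := fun h => by
      have := h2 _ h (Finset.mem_insert_self _ _)
      grind
    rw [Finset.prod_insert n1, Finset.card_insert_of_notMem (fun h => ha (hT h))]

theorem partW_eq {α : Type*} (c m : ℕ → ℝ) (h0 : m 0 = 1)
    (hr : ∀ n, m (n + 1) = ∑ j ∈ Finset.range (n + 1), (n.choose j : ℝ) * (c (j + 1) * m (n - j)))
    (n : ℕ) : ∀ S : Finset α, S.card = n → partW c S = m n := by
  induction n using Nat.strong_induction_on with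
  | _ n ih =>
    intro S hS
    cases n with
    | zero =>
      rw [Finset.card_eq_zero] at hS
      subst hS
      rw [partW_empty, h0]
    | succ n =>
      obtain ⟨a, S', ha, rfl, hc⟩ := Finset.card_eq_succ.1 hS
      rw [partW_insert c S' a ha, hr]
      have : ∀ T ∈ S'.powerset, c (T.card + 1) * partW c (S' \ T) =
          c (T.card + 1) * m (n - T.card) := by
        intro T hT
        have hT := Finset.mem_powerset.1 hT
        rw [ih (n - T.card) (by omega) (S' \ T) (by rw [Finset.card_sdiff_of_subset hT, hc])]
      rw [Finset.sum_congr rfl this,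
        Finset.sum_powerset_apply_card (fun j => c (j + 1) * m (n - j)), hc]
      simp

noncomputable def mom (c : ℕ → ℝ) : ℕ → ℝ
  | 0 => 1
  | n + 1 => ∑ j : Fin (n + 1), (n.choose j : ℝ) * (c (j + 1) * mom c (n - j))

theorem mom_zero (c : ℕ → ℝ) : mom c 0 = 1 := by rw [mom]

theorem mom_succ (c : ℕ → ℝ) (n : ℕ) : mom c (n + 1) =
    ∑ j ∈ Finset.range (n + 1), (n.choose j : ℝ) * (c (j + 1) * mom c (n - j)) := by
  rw [mom, Finset.sum_range]

theorem probFun_eq {Ω : Type*} [MeasurableSpace Ω] (μ : Measure Ω) [IsProbabilityMeasure μ] {N : ℕ}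
    (E : Fin N → Set Ω) (G : (k : ℕ) → (Fin k → Bool) → ℝ)
    (hG : ∀ (k : ℕ), 1 ≤ k → ∀ (hk : k ≤ N) (r : Fin k → Bool),
      G k r = probFun μ E k hk r - partSum G k r)
    (C : ℕ → ℝ)
    (hC : ∀ l : ℕ, 1 ≤ l → l ≤ N →
      G l (fun _ => true) = C l / (N : ℝ) ^ l) (k : ℕ) (hk : k ≤ N) :
    probFun μ E k hk (fun _ => true) = mom C k / (N : ℝ) ^ k := by
  have hW : partW (fun l => C l / (N : ℝ) ^ l) (Finset.univ : Finset (Fin k))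
      = mom C k / (N : ℝ) ^ k := by
    refine partW_eq _ (fun k => mom C k / (N : ℝ) ^ k) (by simp [mom_zero]) ?_ k _ (by simp)
    intro n
    simp only [mom_succ]
    rw [Finset.sum_div]
    refine Finset.sum_congr rfl fun j hj => ?_
    have : n + 1 = (j + 1) + (n - j) := by have := Finset.mem_range.1 hj; omega
    rw [div_mul_div_comm, ← pow_add, ← this, mul_div_assoc]
  rw [← hW]
  rcases Nat.eq_zero_or_pos k with rfl | hk1
  · rw [Finset.univ_eq_empty, partW_empty]
    simp [probFun]
  have h := hG k hk1 hk (fun _ => true)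
  have h2 : probFun μ E k hk (fun _ => true) = G k (fun _ => true) + partSum G k (fun _ => true) := by
    linarith
  rw [h2]
  have : Nonempty (Fin k) := ⟨⟨0, hk1⟩⟩
  set P : Finset (Finset (Finset (Fin k))) := Finset.univ.filter (IsPart Finset.univ) with hP
  have hPm : ({Finset.univ} : Finset (Finset (Fin k))) ∈ P := by
    simp [hP, IsPart]
  have e1 : partW (fun l => C l / (N : ℝ) ^ l) (Finset.univ : Finset (Fin k))
      = ∑ π ∈ P, ∏ B ∈ π, G B.card (fun _ => true) := by
    unfold partW
    simp only [Finset.powerset_univ]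
    refine Finset.sum_congr rfl fun π hπ => Finset.prod_congr rfl fun B hB => ?_
    have hb := (Finset.mem_filter.1 hπ).2.1 B hB
    rw [hC _ (Finset.card_pos.2 hb)]
    exact (Finset.card_le_univ B).trans (by simpa using hk)
  rw [e1, ← Finset.add_sum_erase _ _ hPm]
  congr 1
  · rw [Finset.prod_singleton]
    have : ∀ n, n = k → G k (fun _ => true) = G n (fun _ => true) := by rintro n rfl; rfl
    exact this _ (by simp)
  · unfold partSum
    rw [← Finset.sum_filter]
    refine Finset.sum_congr ?_ fun _ _ => rfl
    ext π
    simp only [hP, Finset.mem_filter, Finset.mem_erase, Finset.mem_univ, true_and, IsPart]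
    constructor
    · rintro ⟨⟨h1, h2⟩, h3⟩
      refine ⟨?_, h1, by simp, ?_, ?_⟩
      · rintro rfl; simp at h3
      · intro i _
        obtain ⟨B, hB, -⟩ := h2 i
        exact ⟨B, hB⟩
      · intro B hB B' hB' i hi hi'
        exact (h2 i).unique ⟨hB, hi⟩ ⟨hB', hi'⟩
    · rintro ⟨h0, h1, -, h3, h4⟩
      refine ⟨⟨h1, fun i => ?_⟩, ?_⟩
      · obtain ⟨B, hB⟩ := h3 i trivial
        exact ⟨B, hB, fun B' hB' => h4 _ hB'.1 _ hB.1 i hB'.2 hB.2⟩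
      · by_contra hlt
        have : π.card = 0 ∨ π.card = 1 := by omega
        obtain ⟨B, hB, hi⟩ := h3 (Classical.arbitrary _) trivial
        rcases this with h | h
        · rw [Finset.card_eq_zero] at h; simp [h] at hB
        · obtain ⟨A, rfl⟩ := Finset.card_eq_one.1 h
          apply h0
          congr 1
          ext i
          obtain ⟨B, hB, hi⟩ := h3 i trivial
          simp at hB
          subst hB
          simp [hi]

theorem mom_hasSum (lmax : ℕ) (C : ℕ → ℝ) (hCz : ∀ l : ℕ, lmax < l → C l = 0) (z : ℂ) :
    HasSum (fun k : ℕ => ((mom C k / k.factorial : ℝ) : ℂ) * z ^ k)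
      (Complex.exp (∑ l ∈ Finset.Icc 1 lmax, ((C l : ℂ) / l.factorial) * z ^ l)) := by
  set Q : ℂ → ℂ := fun z => ∑ l ∈ Finset.Icc 1 lmax, ((C l : ℂ) / l.factorial) * z ^ l with hQ
  have hQc : ContDiff ℂ ⊤ Q := by
    rw [hQ]; fun_prop
  have hQd : Differentiable ℂ Q := by
    rw [hQ]; fun_prop
  set f : ℂ → ℂ := fun z => Complex.exp (Q z) with hf
  have hfd : Differentiable ℂ f := hQd.cexp
  have hfc : ContDiff ℂ ⊤ f := hQc.cexp
  have hder : deriv f = fun z => deriv Q z * f z := by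
    funext z
    have := ((hQd z).hasDerivAt.cexp).deriv
    rw [hf, this, mul_comm]
  have hQi : ∀ j, iteratedDeriv (j + 1) Q 0 = (C (j + 1) : ℂ) := by
    intro j
    rw [hQ, iteratedDeriv_fun_sum (fun i _ => by fun_prop)]
    simp only [iteratedDeriv_const_mul_field, iteratedDeriv_fun_pow_zero]
    by_cases hj : j + 1 ≤ lmax
    · rw [Finset.sum_eq_single (j + 1)]
      · have : ((j + 1).factorial : ℂ) ≠ 0 := by exact_mod_cast Nat.factorial_ne_zero _
        simp
        field_simp
      · intro b _ hb
        simp [Ne.symm hb]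
      · intro h
        exact absurd (Finset.mem_Icc.2 ⟨by omega, hj⟩) h
    · rw [hCz _ (by omega), Finset.sum_eq_zero]
      · simp
      · intro l hl
        have := (Finset.mem_Icc.1 hl).2
        rw [Nat.cast_ite, if_neg (by omega)]; simp
  have hm : ∀ n, iteratedDeriv n f 0 = (mom C n : ℂ) := by
    intro n
    induction n using Nat.strong_induction_on with
    | _ n ih =>
      cases n with
      | zero =>
        rw [iteratedDeriv_zero, mom_zero, hf, hQ]
        simp only [Complex.ofReal_one]
        rw [Finset.sum_eq_zero, Complex.exp_zero]
        intro l hl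
        have := (Finset.mem_Icc.1 hl).1
        rw [zero_pow (by omega), mul_zero]
      | succ n =>
        rw [iteratedDeriv_succ', hder, iteratedDeriv_fun_mul, mom_succ]
        · push_cast
          refine Finset.sum_congr rfl fun j hj => ?_
          rw [← iteratedDeriv_succ', hQi, ih (n - j) (by omega), mul_assoc]
        · exact (hQd.contDiff.deriv' : ContDiff ℂ n (deriv Q)).contDiffAt
        · exact (hfc.of_le le_top).contDiffAt
  have := Complex.hasSum_taylorSeries_of_entire hfd 0 z
  have he : (fun k : ℕ => ((mom C k / k.factorial : ℝ) : ℂ) * z ^ k) =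
      fun n : ℕ => (n.factorial : ℂ)⁻¹ • (z - 0) ^ n • iteratedDeriv n f 0 := by
    funext k
    rw [hm, smul_eq_mul, smul_eq_mul]
    push_cast
    rw [sub_zero]
    ring
  rw [he]
  exact this

theorem choose_inversion (n N s : ℕ) (hn : n ≤ N) :
    ∑ k ∈ Finset.range (N + 1), (-1 : ℝ) ^ (k + s) * k.choose s * n.choose k
      = if n = s then 1 else 0 := by
  have h1 : ∑ k ∈ Finset.range (N + 1), (-1 : ℝ) ^ (k + s) * k.choose s * n.choose k
      = ∑ k ∈ Finset.range (n + 1), (-1 : ℝ) ^ (k + s) * k.choose s * n.choose k := by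
    symm
    apply Finset.sum_subset
    · intro k hk; simp at hk ⊢; omega
    · intro k _ hk
      rw [Nat.choose_eq_zero_of_lt (n := n) (k := k) (by simp at hk; omega)]
      simp
  rw [h1]
  by_cases hs : s ≤ n
  · obtain ⟨d, rfl⟩ := Nat.exists_eq_add_of_le hs
    rw [add_assoc, Finset.sum_range_add, Finset.sum_eq_zero, zero_add]
    · have h2 : ∀ x ∈ Finset.range (d + 1), (-1 : ℝ) ^ (s + x + s) * ((s + x).choose s : ℝ)
          * ((s + d).choose (s + x) : ℝ) = ((s + d).choose s : ℝ) * ((-1) ^ x * (d.choose x : ℝ)) := by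
        intro x _
        have := Nat.choose_mul (n := s + d) (k := s + x) (s := s) (by omega)
        simp only [Nat.add_sub_cancel_left] at this
        have h' : ((s + d).choose (s + x) : ℝ) * ((s + x).choose s : ℝ) =
          ((s + d).choose s : ℝ) * (d.choose x : ℝ) := by exact_mod_cast this
        have h3 : (-1 : ℝ) ^ (s + x + s) = (-1) ^ x := by
          rw [show s + x + s = x + 2 * s by ring, pow_add, pow_mul]; simp
        rw [h3, mul_assoc, mul_comm ((s + x).choose s : ℝ), h']
        ring
      rw [Finset.sum_congr rfl h2, ← Finset.mul_sum]
      have h4 := Int.alternating_sum_range_choose (n := d)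
      have h5 : ∑ x ∈ Finset.range (d + 1), (-1 : ℝ) ^ x * (d.choose x : ℝ) =
          if d = 0 then 1 else 0 := by
        exact_mod_cast h4
      rw [h5]
      by_cases hd : d = 0 <;> simp [hd]
    · intro k hk
      rw [Nat.choose_eq_zero_of_lt (Finset.mem_range.1 hk)]; simp
  · rw [Finset.sum_eq_zero, if_neg (by omega)]
    intro k hk
    rw [Nat.choose_eq_zero_of_lt (n := k) (k := s) (by simp at hk; omega)]; simp

theorem measure_pred {Ω : Type*} [MeasurableSpace Ω] (μ : Measure Ω) [IsProbabilityMeasure μ]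
    {N : ℕ} (E : Fin N → Set Ω) (hE : ∀ i, MeasurableSet (E i)) (Q : (Fin N → Bool) → Prop)
    [DecidablePred Q] :
    (μ {ω | Q (fun i => decide (ω ∈ E i))}).toReal =
      ∑ r : Fin N → Bool, if Q r then jointProb μ E r else 0 := by
  have hm : ∀ r : Fin N → Bool, MeasurableSet {ω | ∀ i, ω ∈ E i ↔ r i = true} := by
    intro r
    have : {ω | ∀ i, ω ∈ E i ↔ r i = true} = ⋂ i, {ω | ω ∈ E i ↔ r i = true} := by
      ext; simp
    rw [this]
    refine MeasurableSet.iInter fun i => ?_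
    by_cases h : r i = true
    · simpa [h] using hE i
    · have : {ω | ω ∈ E i ↔ r i = true} = (E i)ᶜ := by ext; simp [h]
      rw [this]; exact (hE i).compl
  have hset : {ω | Q (fun i => decide (ω ∈ E i))} =
      ⋃ r ∈ (Finset.univ.filter Q), {ω | ∀ i, ω ∈ E i ↔ r i = true} := by
    ext ω
    simp only [Set.mem_ofPred_eq, Set.mem_iUnion, Finset.mem_filter, Finset.mem_univ, true_and,
      exists_prop]
    constructor
    · intro h
      exact ⟨_, h, fun i => by simp⟩
    · rintro ⟨r, hr, h⟩
      convert hr with i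
      simp [h i]
  rw [hset, measure_biUnion_finset, ENNReal.toReal_sum, Finset.sum_filter]
  · rfl
  · intro r _; exact measure_ne_top _ _
  · intro r _ r' _ hne
    rw [Function.onFun, Set.disjoint_left]
    intro ω h h'
    apply hne
    funext i
    have := (h i).symm.trans (h' i)
    exact Bool.eq_iff_iff.2 this
  · intro r _; exact hm r

/-- number of `true`s -/
def cnt {N : ℕ} (r : Fin N → Bool) : ℕ := (Finset.univ.filter (fun i => r i = true)).card

theorem countProb_eq {Ω : Type*} [MeasurableSpace Ω] (μ : Measure Ω) [IsProbabilityMeasure μ]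
    {N : ℕ} (E : Fin N → Set Ω) (hE : ∀ i, MeasurableSet (E i)) (s : ℕ) :
    countProb μ E s = ∑ r : Fin N → Bool, if cnt r = s then jointProb μ E r else 0 := by
  rw [← measure_pred μ E hE (fun r => cnt r = s)]
  unfold countProb
  congr 2
  ext ω
  simp [cnt]

theorem probFun_eq_sum {Ω : Type*} [MeasurableSpace Ω] (μ : Measure Ω) [IsProbabilityMeasure μ]
    {N : ℕ} (E : Fin N → Set Ω) (hE : ∀ i, MeasurableSet (E i)) (k : ℕ) (hk : k ≤ N) :
    probFun μ E k hk (fun _ => true) =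
      ∑ r : Fin N → Bool, if (∀ i : Fin k, r (Fin.castLE hk i) = true)
        then jointProb μ E r else 0 := by
  rw [← measure_pred μ E hE (fun r => ∀ i : Fin k, r (Fin.castLE hk i) = true)]
  unfold probFun
  congr 2
  ext ω
  simp

theorem subset_prob {Ω : Type*} [MeasurableSpace Ω] (μ : Measure Ω) [IsProbabilityMeasure μ]
    {N : ℕ} (E : Fin N → Set Ω) (hE : ∀ i, MeasurableSet (E i)) (hsym : IsSymmetricEvents μ E)
    (k : ℕ) (hk : k ≤ N) (A : Finset (Fin N)) (hA : A.card = k) :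
    ∑ r : Fin N → Bool, (if (∀ i ∈ A, r i = true) then jointProb μ E r else 0) =
      probFun μ E k hk (fun _ => true) := by
  rw [probFun_eq_sum μ E hE]
  let A0 : Finset (Fin N) := Finset.univ.map (Fin.castLEEmb hk)
  have hA0 : A0.card = k := by simp [A0]
  obtain ⟨σ, hσ⟩ : ∃ σ : Equiv.Perm (Fin N), ∀ i, i ∈ A0 ↔ σ i ∈ A := by
    have e : {i // i ∈ A0} ≃ {i // i ∈ A} := Fintype.equivOfCardEq (by simp [hA0, hA])
    refine ⟨e.extendSubtype, fun i => ⟨fun h => e.extendSubtype_mem i h, fun h => ?_⟩⟩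
    by_contra h'
    exact e.extendSubtype_not_mem i h' h
  refine Fintype.sum_equiv (Equiv.arrowCongr σ.symm (Equiv.refl Bool)) _ _ fun r => ?_
  have : (Equiv.arrowCongr σ.symm (Equiv.refl Bool)) r = r ∘ σ := by
    funext i; simp [Equiv.arrowCongr]
  rw [this, ← hsym σ r]
  congr 1
  rw [eq_iff_iff]
  constructor
  · intro h i
    exact h _ ((hσ _).1 (by simp [A0]))
  · intro h i hi
    have h1 : σ.symm i ∈ A0 := (hσ _).2 (by simpa using hi)
    obtain ⟨j, -, hj⟩ := Finset.mem_map.1 h1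
    have := h j
    have hj' : Fin.castLE hk j = σ.symm i := hj
    rw [hj'] at this
    simpa using this

theorem binom_moment {Ω : Type*} [MeasurableSpace Ω] (μ : Measure Ω) [IsProbabilityMeasure μ]
    {N : ℕ} (E : Fin N → Set Ω) (hE : ∀ i, MeasurableSet (E i)) (hsym : IsSymmetricEvents μ E)
    (k : ℕ) (hk : k ≤ N) :
    ∑ r : Fin N → Bool, ((cnt r).choose k : ℝ) * jointProb μ E r =
      (N.choose k : ℝ) * probFun μ E k hk (fun _ => true) := by
  have h1 : ∀ r : Fin N → Bool, ((cnt r).choose k : ℝ) * jointProb μ E r =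
      ∑ A ∈ (Finset.univ : Finset (Fin N)).powersetCard k,
        if (∀ i ∈ A, r i = true) then jointProb μ E r else 0 := by
    intro r
    rw [← Finset.sum_filter, Finset.sum_const, nsmul_eq_mul]
    congr 2
    rw [cnt, ← Finset.card_powersetCard]
    congr 1
    ext A
    simp only [Finset.mem_powersetCard, Finset.mem_filter, Finset.subset_univ, true_and]
    rw [and_comm]
    refine and_congr Iff.rfl ?_
    simp [Finset.subset_iff]
  simp_rw [h1]
  rw [Finset.sum_comm, Finset.sum_congr rfl fun A hA =>
    subset_prob μ E hE hsym k hk A (Finset.mem_powersetCard.1 hA).2]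
  simp

theorem countProb_formula {Ω : Type*} [MeasurableSpace Ω] (μ : Measure Ω) [IsProbabilityMeasure μ]
    {N : ℕ} (E : Fin N → Set Ω) (hE : ∀ i, MeasurableSet (E i)) (hsym : IsSymmetricEvents μ E)
    (m : ℕ → ℝ) (hm : ∀ k (hk : k ≤ N), probFun μ E k hk (fun _ => true) = m k / (N : ℝ) ^ k)
    (s : ℕ) :
    countProb μ E s = ∑' k, (-1 : ℝ) ^ (k + s) * k.choose s *
      ((N.choose k : ℝ) * (1 / (N : ℝ)) ^ k * m k) := by
  rw [tsum_eq_sum (s := Finset.range (N + 1))]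
  · rw [countProb_eq μ E hE]
    have h1 : ∀ r : Fin N → Bool, (if cnt r = s then jointProb μ E r else 0) =
        ∑ k ∈ Finset.range (N + 1), (-1 : ℝ) ^ (k + s) * k.choose s *
          ((cnt r).choose k * jointProb μ E r) := by
      intro r
      have hc : cnt r ≤ N := by
        unfold cnt; exact (Finset.card_le_univ _).trans (by simp)
      simp_rw [← mul_assoc]
      rw [← Finset.sum_mul, choose_inversion _ _ _ hc]
      simp
    simp_rw [h1]
    rw [Finset.sum_comm]
    refine Finset.sum_congr rfl fun k hk => ?_
    have hk : k ≤ N := by simp at hk; omega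
    rw [← Finset.mul_sum, binom_moment μ E hE hsym k hk, hm k hk]
    congr 1
    rw [one_div, inv_pow]; ring
  · intro k hk
    rw [Nat.choose_eq_zero_of_lt (n := N) (k := k) (by simp at hk; omega)]; simp

/-- **Main theorem (Poisson-like distribution).**
For a sequence (in `N`) of symmetric sequences of `N` events that are correlated
up to order `lmax` with the same correlation coefficients `C_1,…,C_lmax`, the count
probabilities `p_N(s)` converge as `N → ∞` to a limit `p_∞(s)` whose characteristic
function is `χ(u) = exp[Σ_{l=1}^{lmax} Σ_{t=0}^l (−1)^{l−t} (C_l/l!) C(l,t) e^{itu}]`. -/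
theorem stmt18 (N₀ lmax : ℕ) (hlmax : 1 ≤ lmax)
    (Ω : ℕ → Type*) (mΩ : ∀ N, MeasurableSpace (Ω N)) (μ : ∀ N, Measure (Ω N))
    (hprob : ∀ N, IsProbabilityMeasure (μ N))
    (E : ∀ N, Fin N → Set (Ω N)) (hE : ∀ N i, MeasurableSet (E N i))
    (hsym : ∀ N, N₀ ≤ N → IsSymmetricEvents (μ N) (E N))
    -- `G N` is the family of correlation functions of the `N`-th sequence of events:
    (G : ∀ _ : ℕ, (k : ℕ) → (Fin k → Bool) → ℝ)
    (hG : ∀ N, N₀ ≤ N → ∀ (k : ℕ), 1 ≤ k → ∀ (hk : k ≤ N) (r : Fin k → Bool),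
      G N k r = probFun (μ N) (E N) k hk r - partSum (G N) k r)
    -- all sequences have the same correlation coefficients `C l = N^l G_l(1,…,1)`,
    -- and they are correlated up to order `lmax`:
    (C : ℕ → ℝ)
    (hC : ∀ N, N₀ ≤ N → ∀ l : ℕ, 1 ≤ l → l ≤ N →
      G N l (fun _ => true) = C l / (N : ℝ) ^ l)
    (hCmax : C lmax ≠ 0) (hCz : ∀ l : ℕ, lmax < l → C l = 0) :
    ∃ p : ℕ → ℝ,
      (∀ s : ℕ, Tendsto (fun N => countProb (μ N) (E N) s) atTop (nhds (p s))) ∧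
      ∀ u : ℝ,
        (∑' s : ℕ, Complex.exp (Complex.I * u * s) * (p s : ℂ)) =
          Complex.exp (∑ l ∈ Finset.Icc 1 lmax, ∑ t ∈ Finset.range (l + 1),
            (-1 : ℂ) ^ (l - t) * ((C l : ℂ) / l.factorial) * (l.choose t) *
              Complex.exp (Complex.I * t * u)) := by
  have ha : ∀ z : ℂ, Summable (fun k : ℕ => ‖((mom C k / k.factorial : ℝ) : ℂ) * z ^ k‖) :=
    fun z => (mom_hasSum lmax C hCz z).summable.norm
  have ha2 : Summable (fun k : ℕ => |mom C k| / k.factorial * 2 ^ k) := by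
    refine (ha 2).congr fun k => ?_
    rw [norm_mul, norm_pow, Complex.norm_real, Real.norm_eq_abs, abs_div, Nat.abs_cast]
    simp
  refine ⟨fun s => ∑' k, (-1 : ℝ) ^ (k + s) * k.choose s * (1 / k.factorial * mom C k), ?_, ?_⟩
  · intro s
    have hmain : Tendsto (fun N : ℕ => ∑' k, (-1 : ℝ) ^ (k + s) * k.choose s *
        ((N.choose k : ℝ) * (1 / (N : ℝ)) ^ k * mom C k)) atTop
        (nhds (∑' k, (-1 : ℝ) ^ (k + s) * k.choose s * (1 / k.factorial * mom C k))) := by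
      refine tendsto_tsum_of_dominated_convergence ha2 ?_ ?_
      · intro k
        have hr : Tendsto (fun n : ℕ => (n : ℝ) * (1 / (n : ℝ))) atTop (nhds 1) := by
          refine tendsto_const_nhds.congr' ?_
          filter_upwards [eventually_gt_atTop 0] with n hn
          have : (n : ℝ) ≠ 0 := by positivity
          field_simp
        have := ProbabilityTheory.tendsto_choose_mul_pow_atTop k hr
        rw [one_pow] at this
        exact (this.mul_const _).const_mul _
      · filter_upwards [eventually_gt_atTop 0] with N hN k
        have hN' : (0 : ℝ) < N := by exact_mod_cast hN
        rw [norm_mul, norm_mul, norm_mul, norm_pow, norm_neg, norm_one, one_pow, one_mul,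
          Real.norm_natCast, Real.norm_eq_abs (mom C k), Real.norm_of_nonneg (by positivity)]
        have h1 : (N.choose k : ℝ) * (1 / (N : ℝ)) ^ k ≤ 1 / k.factorial := by
          have := Nat.choose_le_pow_div (α := ℝ) k N
          calc (N.choose k : ℝ) * (1 / (N : ℝ)) ^ k ≤ (N : ℝ) ^ k / k.factorial * (1 / (N : ℝ)) ^ k := by
                gcongr
            _ = 1 / k.factorial := by
                rw [one_div, inv_pow]; field_simp
        have h2 : (k.choose s : ℝ) ≤ 2 ^ k := by exact_mod_cast Nat.choose_le_two_pow k s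
        calc (k.choose s : ℝ) * ((N.choose k : ℝ) * (1 / (N : ℝ)) ^ k * |mom C k|)
            ≤ 2 ^ k * (1 / k.factorial * |mom C k|) := by gcongr
          _ = |mom C k| / k.factorial * 2 ^ k := by ring
    refine hmain.congr' ?_
    filter_upwards [eventually_ge_atTop N₀] with N hN
    have := hprob N
    exact (countProb_formula (μ N) (E N) (hE N) (hsym N hN) (mom C)
      (fun k hk => probFun_eq (μ N) (E N) (G N) (hG N hN) C (hC N hN) k hk) s).symm
  · intro u
    set z : ℂ := Complex.exp (Complex.I * u) with hz
    have hzn : ‖z‖ = 1 := by rw [hz, mul_comm]; exact Complex.norm_exp_ofReal_mul_I u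
    have hR : (∑ l ∈ Finset.Icc 1 lmax, ∑ t ∈ Finset.range (l + 1),
            (-1 : ℂ) ^ (l - t) * ((C l : ℂ) / l.factorial) * (l.choose t) *
              Complex.exp (Complex.I * t * u)) =
        ∑ l ∈ Finset.Icc 1 lmax, ((C l : ℂ) / l.factorial) * (z - 1) ^ l := by
      refine Finset.sum_congr rfl fun l _ => ?_
      rw [sub_eq_add_neg, add_pow, Finset.mul_sum]
      refine Finset.sum_congr rfl fun t _ => ?_
      rw [hz, ← Complex.exp_nat_mul]
      rw [show Complex.I * t * u = t * (Complex.I * u) by ring]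
      ring
    rw [hR, ← (mom_hasSum lmax C hCz (z - 1)).tsum_eq]
    let F : ℕ → ℕ → ℂ := fun s k => z ^ s *
      ((-1 : ℂ) ^ (k + s) * k.choose s * (1 / k.factorial * (mom C k : ℂ)))
    have hFn : ∀ s k, ‖F s k‖ = k.choose s * (|mom C k| / k.factorial) := by
      intro s k
      simp only [F, norm_mul, norm_pow, hzn, norm_neg, norm_one, one_pow, one_mul,
        Complex.norm_natCast, norm_div, Complex.norm_real, Real.norm_eq_abs]
      ring
    have hFs : ∀ k, ∀ s ∉ Finset.range (k + 1), F s k = 0 := by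
      intro k s hs
      simp only [F]
      rw [Nat.choose_eq_zero_of_lt (by simp at hs; omega)]; simp
    have hsum : Summable (Function.uncurry fun k s => F s k) := by
      rw [← summable_norm_iff, summable_prod_of_nonneg (fun _ => norm_nonneg _)]
      constructor
      · intro k
        refine summable_of_ne_finset_zero (s := Finset.range (k + 1)) fun s hs => ?_
        simp [Function.uncurry, hFs k s hs]
      · refine ha2.congr fun k => ?_
        rw [tsum_eq_sum (s := Finset.range (k + 1))
          (fun s hs => by simp [Function.uncurry, hFs k s hs])]
        simp only [Function.uncurry, hFn]
        rw [← Finset.sum_mul]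
        have : ∑ s ∈ Finset.range (k + 1), (k.choose s : ℝ) = 2 ^ k := by
          exact_mod_cast Nat.sum_range_choose k
        rw [this, mul_comm]
    have hL : ∀ s : ℕ, Complex.exp (Complex.I * u * s) *
        ((∑' k, (-1 : ℝ) ^ (k + s) * k.choose s * (1 / k.factorial * mom C k) : ℝ) : ℂ) =
        ∑' k, F s k := by
      intro s
      simp only [F]
      rw [tsum_mul_left, Complex.ofReal_tsum, hz, ← Complex.exp_nat_mul,
        show Complex.I * u * s = s * (Complex.I * u) by ring]
      push_cast
      rfl
    simp_rw [hL]
    rw [hsum.tsum_comm]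
    refine tsum_congr fun k => ?_
    rw [tsum_eq_sum (hFs k), sub_eq_add_neg, add_pow, Finset.mul_sum]
    refine Finset.sum_congr rfl fun s hs => ?_
    have hs : s ≤ k := by simp at hs; omega
    have hp : (-1 : ℂ) ^ (k + s) = (-1) ^ (k - s) := by
      obtain ⟨d, rfl⟩ := Nat.exists_eq_add_of_le hs
      rw [show s + d + s = d + 2 * s by ring, pow_add, pow_mul, Nat.add_sub_cancel_left]; simp
    simp only [F]
    rw [hp]
    push_cast
    ring
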